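/- Two words u, v ∈ A* are Baxter-equivalent if and only if their P-symbols coincide: u ≡_B v iff P(u) = P(v). -/

import Mathlib

open scoped Classical

/-- Baxter adjacency relations on words over the alphabet of natural numbers. -/
def BaxterAdj (w w' : List ℕ) : Prop :=
  (∃ (a b c d : ℕ) (u v : List ℕ), a ≤ b ∧ b < c ∧ c ≤ d ∧
      w = c :: (u ++ a :: d :: (v ++ [b])) ∧ w' = c :: (u ++ d :: a :: (v ++ [b]))) ∨
  (∃ (a b c d : ℕ) (u v : List ℕ), a < b ∧ b ≤ c ∧ c < d ∧
      w = b :: (u ++ d :: a :: (v ++ [c])) ∧ w' = b :: (u ++ a :: d :: (v ++ [c])))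

/-- One rewriting step: an adjacency applied inside a word (congruence context). -/
def BaxterStep (w w' : List ℕ) : Prop :=
  ∃ (p s u v : List ℕ), BaxterAdj u v ∧ w = p ++ u ++ s ∧ w' = p ++ v ++ s

/-- The Baxter congruence: the equivalence generated by the Baxter steps. -/
def BaxterEquiv : List ℕ → List ℕ → Prop := Relation.EqvGen BaxterStep

/-- Sylvester adjacency: a c u b ≡ c a u b when a ≤ b < c. -/
def SylvAdj (w w' : List ℕ) : Prop :=
  ∃ (a b c : ℕ) (u : List ℕ), a ≤ b ∧ b < c ∧
    w = a :: c :: (u ++ [b]) ∧ w' = c :: a :: (u ++ [b])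

def SylvStep (w w' : List ℕ) : Prop :=
  ∃ (p s u v : List ℕ), SylvAdj u v ∧ w = p ++ u ++ s ∧ w' = p ++ v ++ s

def SylvEquiv : List ℕ → List ℕ → Prop := Relation.EqvGen SylvStep

/-- #-sylvester adjacency: b u a c ≡ b u c a when a < b ≤ c. -/
def SylvHAdj (w w' : List ℕ) : Prop :=
  ∃ (a b c : ℕ) (u : List ℕ), a < b ∧ b ≤ c ∧
    w = b :: (u ++ [a, c]) ∧ w' = b :: (u ++ [c, a])

def SylvHStep (w w' : List ℕ) : Prop :=
  ∃ (p s u v : List ℕ), SylvHAdj u v ∧ w = p ++ u ++ s ∧ w' = p ++ v ++ s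

def SylvHEquiv : List ℕ → List ℕ → Prop := Relation.EqvGen SylvHStep

/-- The standardized word of `u`: position `i` receives the rank of the letter `u i`
(ties broken from left to right), ranks starting at `1`. -/
def std (u : List ℕ) : List ℕ :=
  (List.range u.length).map fun i =>
    ((List.range u.length).filter fun j =>
      decide (u.getD j 0 < u.getD i 0 ∨ (u.getD j 0 = u.getD i 0 ∧ j < i))).length + 1

/-- The maximal letter of a word. -/
def wordMax (u : List ℕ) : ℕ := u.foldr max 0

/-- The Schützenberger transformation: reverse and complement each letter w.r.t. max + 1. -/
def schutz (u : List ℕ) : List ℕ := u.reverse.map fun x => wordMax u + 1 - x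

/-- Labeled binary trees. -/
inductive BT where
  | leaf : BT
  | node : BT → ℕ → BT → BT
deriving DecidableEq

/-- Leaf insertion into a left binary search tree. -/
def leafInsL : BT → ℕ → BT
  | .leaf, a => .node .leaf a .leaf
  | .node l b r, a => if a < b then .node (leafInsL l a) b r else .node l b (leafInsL r a)

/-- Leaf insertion into a right binary search tree. -/
def leafInsR : BT → ℕ → BT
  | .leaf, a => .node .leaf a .leaf
  | .node l b r, a => if a ≤ b then .node (leafInsR l a) b r else .node l b (leafInsR r a)

/-- The lower restricted tree `T_{≤ a}` of a right binary search tree. -/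
def splitLE : BT → ℕ → BT
  | .leaf, _ => .leaf
  | .node l b r, a => if b ≤ a then .node l b (splitLE r a) else splitLE l a

/-- The higher restricted tree `T_{> a}` of a right binary search tree. -/
def splitGT : BT → ℕ → BT
  | .leaf, _ => .leaf
  | .node l b r, a => if b ≤ a then splitGT r a else .node (splitGT l a) b r

/-- Root insertion into a right binary search tree. -/
def rootIns (t : BT) (a : ℕ) : BT := .node (splitLE t a) a (splitGT t a)

/-- The left tree of the P-symbol: leaf insertions from left to right. -/
def insL (u : List ℕ) : BT := u.foldl leafInsL .leaf

/-- The right tree of the P-symbol: root insertions from left to right. -/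
def insR (u : List ℕ) : BT := u.foldl rootIns .leaf

/-- The P-symbol of a word. -/
def Psymb (u : List ℕ) : BT × BT := (insL u, insR u)

/-- Unlabeled binary trees. -/
inductive UBT where
  | leaf : UBT
  | node : UBT → UBT → UBT
deriving DecidableEq

/-- The shape of a labeled binary tree. -/
def shape : BT → UBT
  | .leaf => .leaf
  | .node l _ r => .node (shape l) (shape r)

/-- The shape of the P-symbol of a word. -/
def Pshape (u : List ℕ) : UBT × UBT := (shape (insL u), shape (insR u))

/-- Number of internal nodes. -/
def sizeU : UBT → ℕ
  | .leaf => 0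
  | .node l r => sizeU l + sizeU r + 1

/-- Orientations of the leaves, from left to right: `true` means right-oriented
(the leaf is the right child of its parent); the parameter is the orientation
assigned if the tree is reduced to a leaf. -/
def loU : UBT → Bool → List Bool
  | .leaf, b => [b]
  | .node l r, _ => loU l false ++ loU r true

/-- Leaf orientations of a labeled binary tree. -/
def loB : BT → Bool → List Bool
  | .leaf, b => [b]
  | .node l _ r, _ => loB l false ++ loB r true

/-- The canopy: orientations of the leaves except the first and the last one. -/
def canU (t : UBT) : List Bool := ((loU t false).drop 1).dropLast

/-- A pair of twin binary trees: same number of nodes and complementary canopies. -/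
def IsTwin (J : UBT × UBT) : Prop :=
  sizeU J.1 = sizeU J.2 ∧ (canU J.1).length = (canU J.2).length ∧
    ∀ i < (canU J.1).length, (canU J.1).getD i false ≠ (canU J.2).getD i false

/-- `σ` is (the word of) a permutation of `{1, …, n}`. -/
def IsPerm (n : ℕ) (σ : List ℕ) : Prop := σ.Perm (List.range' 1 n)

/-- Covering-type step of the right permutohedron (weak) order: exchange of two
adjacent letters `a < b`. -/
def PermutoStep (σ ν : List ℕ) : Prop :=
  ∃ (p s : List ℕ) (a b : ℕ), a < b ∧ σ = p ++ a :: b :: s ∧ ν = p ++ b :: a :: s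

/-- The right permutohedron (weak) order. -/
def PermutoLe : List ℕ → List ℕ → Prop := Relation.ReflTransGen PermutoStep

/-- Baxter permutations: avoiding the generalized patterns 2-41-3 and 3-14-2. -/
def IsBaxterPerm (σ : List ℕ) : Prop :=
  ∀ i j k, i < j → j + 1 < k → k < σ.length →
    ¬(σ.getD (j+1) 0 < σ.getD i 0 ∧ σ.getD i 0 < σ.getD k 0 ∧ σ.getD k 0 < σ.getD j 0) ∧
    ¬(σ.getD j 0 < σ.getD k 0 ∧ σ.getD k 0 < σ.getD i 0 ∧ σ.getD i 0 < σ.getD (j+1) 0)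

/-- Generic leaf insertion, `lt x b` deciding whether `x` goes to the left of `b`. -/
def gIns (lt : ℕ → ℕ → Bool) : BT → ℕ → BT
  | .leaf, a => .node .leaf a .leaf
  | .node l b r, a => if lt a b then .node (gIns lt l a) b r else .node l b (gIns lt r a)

/-- Generic binary search tree of a word. -/
def gTree (lt : ℕ → ℕ → Bool) (u : List ℕ) : BT := u.foldl (gIns lt) .leaf

theorem foldl_gIns_node (lt : ℕ → ℕ → Bool) (w : List ℕ) (l r : BT) (b : ℕ) :
    w.foldl (gIns lt) (.node l b r) =
      .node ((w.filter fun x => lt x b).foldl (gIns lt) l) b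
        ((w.filter fun x => !lt x b).foldl (gIns lt) r) := by
  induction w generalizing l r with
  | nil => simp
  | cons a w ih =>
    cases h : lt a b <;> simp [gIns, h, ih]

theorem gTree_cons (lt : ℕ → ℕ → Bool) (b : ℕ) (w : List ℕ) :
    gTree lt (b :: w) = .node (gTree lt (w.filter fun x => lt x b)) b
      (gTree lt (w.filter fun x => !lt x b)) := by
  simp only [gTree, List.foldl_cons, gIns, foldl_gIns_node]

theorem gTree_nil (lt : ℕ → ℕ → Bool) : gTree lt [] = .leaf := rfl

theorem insL_eq (u : List ℕ) : insL u = gTree (fun x b => decide (x < b)) u := by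
  have : leafInsL = gIns (fun x b => decide (x < b)) := by
    funext t a
    induction t with
    | leaf => rfl
    | node l b r ihl ihr => simp [leafInsL, gIns, ihl, ihr]
  rw [insL, gTree, this]

theorem split_gTree (b : ℕ) (n : ℕ) : ∀ u : List ℕ, u.length ≤ n →
    splitLE (gTree (fun x b => decide (x ≤ b)) u) b =
      gTree (fun x b => decide (x ≤ b)) (u.filter fun x => decide (x ≤ b)) ∧
    splitGT (gTree (fun x b => decide (x ≤ b)) u) b =
      gTree (fun x b => decide (x ≤ b)) (u.filter fun x => !decide (x ≤ b)) := by
  induction n with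
  | zero =>
    intro u hu
    have : u = [] := List.length_eq_zero_iff.mp (by omega)
    subst this
    simp [gTree_nil, splitLE, splitGT]
  | succ n ih =>
    intro u hu
    match u with
    | [] => simp [gTree_nil, splitLE, splitGT]
    | c :: u =>
      have hl : u.length ≤ n := by simpa using hu
      have h1 := ih (u.filter fun x => decide (x ≤ c)) ((List.length_filter_le _ _).trans hl)
      have h2 := ih (u.filter fun x => !decide (x ≤ c)) ((List.length_filter_le _ _).trans hl)
      by_cases hcb : c ≤ b
      · simp only [gTree_cons, splitLE, splitGT, hcb, if_true, h2, List.filter_cons,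
          decide_true, List.filter_filter, Bool.not_true, Bool.false_eq_true, if_false]
        refine ⟨?_, ?_⟩
        · congr 1
          · congr 1; apply List.filter_congr; intro x _; first | exact Bool.and_comm _ _ | (simp; omega)
          · congr 1; apply List.filter_congr; intro x _; first | exact Bool.and_comm _ _ | (simp; omega)
        · congr 1
          apply List.filter_congr; intro x _; simp; omega
      · simp only [gTree_cons, splitLE, splitGT, hcb, if_true, h1, List.filter_cons,
          decide_false, List.filter_filter, Bool.not_false, Bool.false_eq_true, if_false]
        refine ⟨?_, ?_⟩
        · congr 1
          apply List.filter_congr; intro x _; simp; omega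
        · congr 1
          · congr 1; apply List.filter_congr; intro x _; first | exact Bool.and_comm _ _ | (simp; omega)
          · congr 1; apply List.filter_congr; intro x _; first | exact Bool.and_comm _ _ | (simp; omega)

theorem insR_eq (u : List ℕ) : insR u = gTree (fun x b => decide (x ≤ b)) u.reverse := by
  induction u using List.reverseRecOn with
  | nil => rfl
  | append_singleton u b ih =>
    have h : insR (u ++ [b]) = rootIns (insR u) b := by simp [insR]
    have h2 := split_gTree b _ u.reverse le_rfl
    rw [h, ih, rootIns, h2.1, h2.2, List.reverse_append, List.reverse_singleton,
      List.singleton_append, gTree_cons]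

/-- Adjacent letters separated by an earlier letter commute. -/
theorem gTree_swap (lt : ℕ → ℕ → Bool)
    (hm : ∀ x y z w, lt x y = true → lt z y = false → lt x w = false → lt z w = true → False)
    (hnn : ∀ a d b c, lt a c = true → lt d c = false → lt a b = false → lt d b = false →
      lt c b = false)
    (htt : ∀ a d b c, lt a c = true → lt d c = false → lt a b = true → lt d b = true →
      lt c b = true)
    (a d c : ℕ) (h1 : lt a c = true) (h2 : lt d c = false) (n : ℕ) :
    ∀ p s : List ℕ, p.length ≤ n → c ∈ p →
      gTree lt (p ++ a :: d :: s) = gTree lt (p ++ d :: a :: s) := by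
  induction n with
  | zero =>
    intro p s hp hc
    have : p = [] := List.length_eq_zero_iff.mp (by omega)
    subst this
    simp at hc
  | succ n ih =>
    intro p s hp hc
    match p with
    | [] => simp at hc
    | b :: p =>
      have hlen : p.length ≤ n := by simpa using hp
      have hlf : ∀ q : ℕ → Bool, (p.filter q).length ≤ n :=
        fun q => (List.length_filter_le _ _).trans hlen
      simp only [List.cons_append, gTree_cons, List.filter_append, List.filter_cons]
      cases ha : lt a b <;> cases hd : lt d b
      · have hcb : lt c b = false := hnn a d b c h1 h2 ha hd
        have hcp : c ∈ p.filter fun x => !lt x b := by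
          rcases List.mem_cons.mp hc with rfl | hc
          · simp [h1] at ha
          · simp [hc, hcb]
        simp [ih _ _ (hlf _) hcp]
      · exact (hm a c d b h1 h2 ha hd).elim
      · simp
      · have hcb := htt a d b c h1 h2 ha hd
        have hcp : c ∈ p.filter fun x => lt x b := by
          rcases List.mem_cons.mp hc with rfl | hc
          · simp [h2] at hd
          · simp [hc, hcb]
        simp [ih _ _ (hlf _) hcp]

theorem gTree_count (lt : ℕ → ℕ → Bool) (n : ℕ) : ∀ u v : List ℕ, u.length ≤ n →
    gTree lt u = gTree lt v → ∀ x, u.count x = v.count x := by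
  induction n with
  | zero =>
    intro u v hu h x
    have : u = [] := List.length_eq_zero_iff.mp (by omega)
    subst this
    cases v with
    | nil => rfl
    | cons b v => simp [gTree_nil, gTree_cons] at h
  | succ n ih =>
    intro u v hu h x
    match u, v with
    | [], [] => rfl
    | [], b :: v => simp [gTree_nil, gTree_cons] at h
    | b :: u, [] => simp [gTree_nil, gTree_cons] at h
    | b :: u, b' :: v =>
      rw [gTree_cons, gTree_cons] at h
      injection h with hl hb hr
      subst hb
      have hlen : u.length ≤ n := by simpa using hu
      rw [List.count_cons, List.count_cons]
      congr 1
      cases hx : lt x b with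
      | true =>
        have := ih _ _ ((List.length_filter_le _ _).trans hlen) hl x
        rwa [List.count_filter (by simpa using hx), List.count_filter (by simpa using hx)] at this
      | false =>
        have := ih _ _ ((List.length_filter_le _ _).trans hlen) hr x
        rwa [List.count_filter (by simpa using hx), List.count_filter (by simpa using hx)] at this

/-- If two adjacent letters occur in the opposite order in a word with the same tree,
an earlier letter separates them. -/
theorem gTree_sep (lt : ℕ → ℕ → Bool) (y z : ℕ) (hyz : y ≠ z) (n : ℕ) :
    ∀ u v p s w v2 : List ℕ, p.length ≤ n → gTree lt u = gTree lt v →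
      v = w ++ y :: v2 → w.count y = p.count y →
      ((u = p ++ z :: y :: s ∧ w.count z ≤ p.count z) ∨
        (u = p ++ y :: z :: s ∧ p.count z < w.count z)) →
      ∃ c ∈ p, lt y c ≠ lt z c := by
  induction n with
  | zero =>
    intro u v p s w v2 hp h hv hc hu
    have : p = [] := List.length_eq_zero_iff.mp (by omega)
    subst this
    exfalso
    cases w with
    | nil =>
      rcases hu with ⟨hu, hz⟩ | ⟨hu, hz⟩
      · subst hu hv
        simp only [List.nil_append, gTree_cons] at h
        injection h with _ hb _
        exact hyz hb.symm
      · simp at hz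
    | cons b w =>
      rcases hu with ⟨hu, hz⟩ | ⟨hu, hz⟩
      · subst hu hv
        simp only [List.nil_append, List.cons_append, gTree_cons] at h
        injection h with _ hb _
        subst hb
        simp at hz
      · subst hu hv
        simp only [List.nil_append, List.cons_append, gTree_cons] at h
        injection h with _ hb _
        subst hb
        simp at hc
  | succ n ih =>
    intro u v p s w v2 hp h hv hc hu
    match p, w with
    | [], w => exact ih u v [] s w v2 (by simp) h hv hc hu
    | b :: p, [] =>
      exfalso
      rcases hu with ⟨hu, hz⟩ | ⟨hu, hz⟩
      · subst hu hv
        simp only [List.nil_append, List.cons_append, gTree_cons] at h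
        injection h with _ hb _
        subst hb
        simp at hc
      · simp at hz
    | b :: p, b' :: w =>
      by_cases hs : lt y b = lt z b
      swap
      · exact ⟨b, by simp, hs⟩
      have hbb : b = b' := by
        rcases hu with ⟨hu, hz⟩ | ⟨hu, hz⟩ <;>
        · subst hu hv
          simp only [List.cons_append, gTree_cons] at h
          injection h
      subst hbb
      have hlen : p.length ≤ n := by simpa using hp
      have hc' : w.count y = p.count y := by
        rw [List.count_cons, List.count_cons] at hc; omega
      have key : ∀ q : ℕ → Bool, q y = true → q z = true →
          (∀ u', u = b :: u' → ∀ v', v = b :: v' →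
            gTree lt (u'.filter q) = gTree lt (v'.filter q)) →
          ∃ c ∈ b :: p, lt y c ≠ lt z c := by
        intro q hqy hqz hq
        have hlen' : (p.filter q).length ≤ n := (List.length_filter_le _ _).trans hlen
        have hcf : (w.filter q).count y = (p.filter q).count y := by
          rw [List.count_filter hqy, List.count_filter hqy, hc']
        have hfin : ∃ c ∈ p.filter q, lt y c ≠ lt z c := by
          rcases hu with ⟨hu, hz⟩ | ⟨hu, hz⟩
          · refine ih _ _ (p.filter q) (s.filter q) (w.filter q) (v2.filter q) hlen'
              (hq _ hu _ hv) (by simp [hqy]) hcf (Or.inl ⟨by simp [hqy, hqz], ?_⟩)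
            rw [List.count_filter hqz, List.count_filter hqz]
            rw [List.count_cons, List.count_cons] at hz; omega
          · refine ih _ _ (p.filter q) (s.filter q) (w.filter q) (v2.filter q) hlen'
              (hq _ hu _ hv) (by simp [hqy]) hcf (Or.inr ⟨by simp [hqy, hqz], ?_⟩)
            rw [List.count_filter hqz, List.count_filter hqz]
            rw [List.count_cons, List.count_cons] at hz; omega
        obtain ⟨c, hcm, hcs⟩ := hfin
        exact ⟨c, List.mem_cons_of_mem _ (List.mem_filter.mp hcm).1, hcs⟩
      cases hy : lt y b with
      | true =>
        refine key (fun x => lt x b) hy (hs ▸ hy) ?_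
        intro u' hu' v' hv'
        rw [hu', hv', gTree_cons, gTree_cons] at h
        injection h
      | false =>
        refine key (fun x => !lt x b) (by simp [hy]) (by simp [← hs, hy]) ?_
        intro u' hu' v' hv'
        rw [hu', hv', gTree_cons, gTree_cons] at h
        injection h

/-- Swapping a separated adjacent pair does not change the P-symbol. -/
theorem Psymb_swap (a d b c : ℕ) (p s : List ℕ) (hc : c ∈ p) (hb : b ∈ s)
    (h1 : a < c) (h2 : c ≤ d) (h3 : a ≤ b) (h4 : b < d) :
    Psymb (p ++ a :: d :: s) = Psymb (p ++ d :: a :: s) := by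
  have hL := gTree_swap (fun x b => decide (x < b)) (by simp; omega) (by simp; omega) (by simp; omega) a d c (by simpa using h1)
    (by simpa using h2) _ p s le_rfl hc
  have hR := gTree_swap (fun x b => decide (x ≤ b)) (by simp; omega) (by simp; omega) (by simp; omega) a d b (by simpa using h3)
    (by simpa using h4) _ s.reverse p.reverse le_rfl (by simpa using hb)
  simp only [Psymb, insL_eq, insR_eq, hL]
  simp only [List.reverse_append, List.reverse_cons, List.append_assoc, List.singleton_append]
  simp only [List.nil_append, List.cons_append]
  rw [hR]

theorem Psymb_step (u v : List ℕ) (h : BaxterStep u v) : Psymb u = Psymb v := by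
  obtain ⟨p, s, u', v', h, rfl, rfl⟩ := h
  rcases h with ⟨a, b, c, d, x, y, h1, h2, h3, rfl, rfl⟩ | ⟨a, b, c, d, x, y, h1, h2, h3, rfl, rfl⟩
  · have := Psymb_swap a d b c (p ++ c :: x) (y ++ b :: s) (by simp) (by simp)
      (by omega) h3 h1 (by omega)
    simpa using this
  · have := Psymb_swap a d c b (p ++ b :: x) (y ++ c :: s) (by simp) (by simp)
      h1 (by omega) (by omega) h3
    simpa using this.symm

theorem Psymb_of_equiv (u v : List ℕ) (h : BaxterEquiv u v) : Psymb u = Psymb v := by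
  induction h with
  | rel x y h => exact Psymb_step x y h
  | refl x => rfl
  | symm x y _ ih => exact ih.symm
  | trans x y z _ _ ih1 ih2 => exact ih1.trans ih2

theorem equiv_swap (a d b c : ℕ) (p s : List ℕ) (hc : c ∈ p) (hb : b ∈ s)
    (h1 : a < c) (h2 : c ≤ d) (h3 : a ≤ b) (h4 : b < d) :
    BaxterEquiv (p ++ a :: d :: s) (p ++ d :: a :: s) := by
  obtain ⟨p1, p2, rfl⟩ := List.append_of_mem hc
  obtain ⟨s1, s2, rfl⟩ := List.append_of_mem hb
  by_cases hbc : b < c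
  · exact .rel _ _ ⟨p1, s2, _, _, Or.inl ⟨a, b, c, d, p2, s1, h3, hbc, h2, rfl, rfl⟩,
      by simp, by simp⟩
  · exact .symm _ _ (.rel _ _ ⟨p1, s2, _, _,
      Or.inr ⟨a, c, b, d, p2, s1, h1, by omega, h4, rfl, rfl⟩, by simp, by simp⟩)

theorem Psymb_count (u v : List ℕ) (h : Psymb u = Psymb v) (x : ℕ) : u.count x = v.count x := by
  have h' : insL u = insL v := congrArg Prod.fst h
  rw [insL_eq, insL_eq] at h'
  exact gTree_count _ _ u v le_rfl h' x

theorem equiv_disorder (y z : ℕ) (p s w v2 : List ℕ) (hyz : y ≠ z)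
    (h : Psymb (p ++ z :: y :: s) = Psymb (w ++ y :: v2))
    (hy : w.count y = p.count y) (hz : w.count z ≤ p.count z) :
    BaxterEquiv (p ++ z :: y :: s) (p ++ y :: z :: s) := by
  have hcy := Psymb_count _ _ h y
  have hcz := Psymb_count _ _ h z
  have hyz' := hyz.symm
  simp only [List.count_append, List.count_cons, beq_self_eq_true, if_true, beq_iff_eq, hyz,
    hyz', if_false] at hcy hcz
  have hL : insL _ = insL _ := congrArg Prod.fst h
  have hR : insR _ = insR _ := congrArg Prod.snd h
  rw [insL_eq, insL_eq] at hL
  rw [insR_eq, insR_eq] at hR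
  obtain ⟨c, hc, hcs⟩ := gTree_sep _ y z hyz _ _ _ p s w v2 le_rfl hL rfl hy (Or.inl ⟨rfl, hz⟩)
  obtain ⟨b, hb, hbs⟩ := gTree_sep _ y z hyz _ _ _ s.reverse p.reverse v2.reverse w.reverse le_rfl
    hR (by simp) (by simp; omega) (Or.inr ⟨by simp, by simp; omega⟩)
  rw [List.mem_reverse] at hb
  simp only [ne_eq, decide_eq_decide] at hcs hbs
  rcases lt_or_gt_of_ne hyz with hlt | hlt
  · exact .symm _ _ (equiv_swap y z b c p s hc hb (by omega) (by omega) (by omega) (by omega))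
  · exact equiv_swap z y b c p s hc hb (by omega) (by omega) (by omega) (by omega)

theorem equiv_bubble (y : ℕ) (w v2 r : List ℕ) : ∀ u2 : List ℕ, y ∉ r →
    Psymb (w ++ r ++ y :: u2) = Psymb (w ++ y :: v2) →
    BaxterEquiv (w ++ r ++ y :: u2) (w ++ y :: (r ++ u2)) := by
  induction r using List.reverseRecOn with
  | nil => intro u2 _ _; simpa [BaxterEquiv] using Relation.EqvGen.refl _
  | append_singleton r z ih =>
    intro u2 hy h
    simp only [List.mem_append, List.mem_singleton, not_or] at hy
    have h' : Psymb ((w ++ r) ++ z :: y :: u2) = Psymb (w ++ y :: v2) := by simpa using h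
    have e1 := equiv_disorder y z (w ++ r) u2 w v2 hy.2 h'
      (by simp [List.count_eq_zero_of_not_mem hy.1]) (by simp)
    have e2 := ih (z :: u2) hy.1 ((Psymb_of_equiv _ _ e1).symm.trans h')
    have e3 := Relation.EqvGen.trans _ _ _ e1 e2
    simpa [BaxterEquiv] using e3

theorem equiv_of_Psymb (v' : List ℕ) : ∀ w u' : List ℕ,
    Psymb (w ++ u') = Psymb (w ++ v') → BaxterEquiv (w ++ u') (w ++ v') := by
  induction v' with
  | nil =>
    intro w u' h
    have : u' = [] := by
      rw [List.eq_nil_iff_forall_not_mem]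
      intro x hx
      have h1 := Psymb_count _ _ h x
      have h2 := List.count_pos_iff.mpr hx
      simp only [List.count_append, List.count_nil] at h1
      omega
    subst this
    exact .refl _
  | cons y v2 ih =>
    intro w u' h
    have hy : y ∈ u' := by
      have h1 := Psymb_count _ _ h y
      simp only [List.count_append, List.count_cons_self] at h1
      exact List.count_pos_iff.mp (by omega)
    obtain ⟨r, u2, rfl, hr⟩ := List.eq_append_cons_of_mem hy
    rw [← List.append_assoc] at h ⊢
    have e1 := equiv_bubble y w v2 r u2 hr h
    have h2 := (Psymb_of_equiv _ _ e1).symm.trans h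
    have e2 := ih (w ++ [y]) (r ++ u2) (by simpa using h2)
    refine Relation.EqvGen.trans _ _ _ e1 ?_
    simpa [BaxterEquiv] using e2

/-- two words are Baxter-equivalent iff their P-symbols coincide. -/
theorem baxterEquiv_iff_Psymb_eq (u v : List ℕ) :
    BaxterEquiv u v ↔ Psymb u = Psymb v := by
  exact ⟨Psymb_of_equiv u v, fun h => by simpa using equiv_of_Psymb v [] u (by simpa using h)⟩
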